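/- arXiv:2204.03882 — 4 statements merged into one kernel-verified Lean document; each statement's English description precedes it below -/
import Mathlib

section
/- In the logic PL^S₀, for distinct propositional variables A and B, none of the formulae A ∨ ¬A, A ⊃ (¬A ⊃ B), and ¬(A ∧ ¬A) is derivable. -/
/-!  Deep embedding of the many-sorted paraconsistent logic `PL^S₀`
(a many-sorted version of López-Escobar's refutability calculus).

Formulae are built from atomic formulae (a predicate symbol applied to a list
of sorted individual variables) using implication `⊃`, conjunction `∧`,
disjunction `∨`, a primitive negation `¬`, and sorted quantifiers `∀`, `∃`.
Each variable carries a fixed sort given by a map `sortOf : V → S`;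
terms are just variables (no function symbols).  -/

inductive PLS0.Formula (S V P : Type) : Type
  | atom : P → List V → PLS0.Formula S V P
  | impl : PLS0.Formula S V P → PLS0.Formula S V P → PLS0.Formula S V P
  | conj : PLS0.Formula S V P → PLS0.Formula S V P → PLS0.Formula S V P
  | disj : PLS0.Formula S V P → PLS0.Formula S V P → PLS0.Formula S V P
  | neg  : PLS0.Formula S V P → PLS0.Formula S V P
  | all  : V → PLS0.Formula S V P → PLS0.Formula S V P
  | ex   : V → PLS0.Formula S V P → PLS0.Formula S V P

namespace PLS0

variable {S V P : Type} [DecidableEq V]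

/-- Free variables of a formula. -/
def Formula.free : Formula S V P → Set V
  | .atom _ args => {v | v ∈ args}
  | .impl A B => A.free ∪ B.free
  | .conj A B => A.free ∪ B.free
  | .disj A B => A.free ∪ B.free
  | .neg A => A.free
  | .all x A => A.free \ {x}
  | .ex x A => A.free \ {x}

/-- Bound variables of a formula. -/
def Formula.bound : Formula S V P → Set V
  | .atom _ _ => ∅
  | .impl A B => A.bound ∪ B.bound
  | .conj A B => A.bound ∪ B.bound
  | .disj A B => A.bound ∪ B.bound
  | .neg A => A.bound
  | .all x A => insert x A.bound
  | .ex x A => insert x A.bound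

/-- `A.subst x y` replaces the free occurrences of the variable `x` by the
variable `y` in `A`. -/
def Formula.subst (x y : V) : Formula S V P → Formula S V P
  | .atom p args => .atom p (args.map fun v => if v = x then y else v)
  | .impl A B => .impl (A.subst x y) (B.subst x y)
  | .conj A B => .conj (A.subst x y) (B.subst x y)
  | .disj A B => .disj (A.subst x y) (B.subst x y)
  | .neg A => .neg (A.subst x y)
  | .all z A => if z = x then .all z A else .all z (A.subst x y)
  | .ex z A => if z = x then .ex z A else .ex z (A.subst x y)

/-- Natural-deduction derivability `Γ ⊢ A` in `PL^S₀`.  The rules for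
`⊃, ∧, ∨, ∀, ∃` are the intuitionistic ones; the primitive negation is
governed by introduction/elimination rules for the negation of each
connective: `¬(A⊃B)` has the rules of `A∧¬B`, `¬(A∧B)` those of `¬A∨¬B`,
`¬(A∨B)` those of `¬A∧¬B`, `¬∀x A` those of `∃x ¬A`, `¬∃x A` those of
`∀x ¬A`, and `¬¬A` those of `A`. -/
inductive Deriv (sortOf : V → S) : Set (Formula S V P) → Formula S V P → Prop
  | ax {Γ A} : A ∈ Γ → Deriv sortOf Γ A
  -- implication
  | implI {Γ A B} : Deriv sortOf (insert A Γ) B → Deriv sortOf Γ (.impl A B)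
  | implE {Γ A B} : Deriv sortOf Γ (.impl A B) → Deriv sortOf Γ A → Deriv sortOf Γ B
  -- conjunction
  | conjI {Γ A B} : Deriv sortOf Γ A → Deriv sortOf Γ B → Deriv sortOf Γ (.conj A B)
  | conjE1 {Γ A B} : Deriv sortOf Γ (.conj A B) → Deriv sortOf Γ A
  | conjE2 {Γ A B} : Deriv sortOf Γ (.conj A B) → Deriv sortOf Γ B
  -- disjunction
  | disjI1 {Γ A B} : Deriv sortOf Γ A → Deriv sortOf Γ (.disj A B)
  | disjI2 {Γ A B} : Deriv sortOf Γ B → Deriv sortOf Γ (.disj A B)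
  | disjE {Γ A B C} : Deriv sortOf Γ (.disj A B) → Deriv sortOf (insert A Γ) C →
      Deriv sortOf (insert B Γ) C → Deriv sortOf Γ C
  -- universal quantifier
  | allI {Γ x A} : Deriv sortOf Γ A → (∀ C ∈ Γ, x ∉ Formula.free C) →
      Deriv sortOf Γ (.all x A)
  | allE {Γ x y A} : Deriv sortOf Γ (.all x A) → sortOf y = sortOf x →
      y ∉ Formula.bound A → Deriv sortOf Γ (A.subst x y)
  -- existential quantifier
  | exI {Γ x y A} : Deriv sortOf Γ (A.subst x y) → sortOf y = sortOf x →
      y ∉ Formula.bound A → Deriv sortOf Γ (.ex x A)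
  | exE {Γ x A C} : Deriv sortOf Γ (.ex x A) → Deriv sortOf (insert A Γ) C →
      (∀ D ∈ Γ, x ∉ Formula.free D) → x ∉ Formula.free C → Deriv sortOf Γ C
  -- negated implication (rules of `A ∧ ¬B`)
  | negImplI {Γ A B} : Deriv sortOf Γ A → Deriv sortOf Γ (.neg B) →
      Deriv sortOf Γ (.neg (.impl A B))
  | negImplE1 {Γ A B} : Deriv sortOf Γ (.neg (.impl A B)) → Deriv sortOf Γ A
  | negImplE2 {Γ A B} : Deriv sortOf Γ (.neg (.impl A B)) → Deriv sortOf Γ (.neg B)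
  -- negated conjunction (rules of `¬A ∨ ¬B`)
  | negConjI1 {Γ A B} : Deriv sortOf Γ (.neg A) → Deriv sortOf Γ (.neg (.conj A B))
  | negConjI2 {Γ A B} : Deriv sortOf Γ (.neg B) → Deriv sortOf Γ (.neg (.conj A B))
  | negConjE {Γ A B C} : Deriv sortOf Γ (.neg (.conj A B)) →
      Deriv sortOf (insert (.neg A) Γ) C → Deriv sortOf (insert (.neg B) Γ) C →
      Deriv sortOf Γ C
  -- negated disjunction (rules of `¬A ∧ ¬B`)
  | negDisjI {Γ A B} : Deriv sortOf Γ (.neg A) → Deriv sortOf Γ (.neg B) →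
      Deriv sortOf Γ (.neg (.disj A B))
  | negDisjE1 {Γ A B} : Deriv sortOf Γ (.neg (.disj A B)) → Deriv sortOf Γ (.neg A)
  | negDisjE2 {Γ A B} : Deriv sortOf Γ (.neg (.disj A B)) → Deriv sortOf Γ (.neg B)
  -- negated universal (rules of `∃x ¬A`)
  | negAllI {Γ x y A} : Deriv sortOf Γ (.neg (A.subst x y)) → sortOf y = sortOf x →
      y ∉ Formula.bound A → Deriv sortOf Γ (.neg (.all x A))
  | negAllE {Γ x A C} : Deriv sortOf Γ (.neg (.all x A)) →
      Deriv sortOf (insert (.neg A) Γ) C → (∀ D ∈ Γ, x ∉ Formula.free D) →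
      x ∉ Formula.free C → Deriv sortOf Γ C
  -- negated existential (rules of `∀x ¬A`)
  | negExI {Γ x A} : Deriv sortOf Γ (.neg A) → (∀ C ∈ Γ, x ∉ Formula.free C) →
      Deriv sortOf Γ (.neg (.ex x A))
  | negExE {Γ x y A} : Deriv sortOf Γ (.neg (.ex x A)) → sortOf y = sortOf x →
      y ∉ Formula.bound A → Deriv sortOf Γ (.neg (A.subst x y))
  -- double negation (rules of `A`)
  | negNegI {Γ A} : Deriv sortOf Γ A → Deriv sortOf Γ (.neg (.neg A))
  | negNegE {Γ A} : Deriv sortOf Γ (.neg (.neg A)) → Deriv sortOf Γ A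

/-- Equivalence: `A ⇔ B := (A ⊃ B) ∧ (B ⊃ A)`. -/
def Formula.equiv (A B : Formula S V P) : Formula S V P :=
  .conj (.impl A B) (.impl B A)

/-- Strong equivalence: `A ⇔ₛ B := (A ⇔ B) ∧ (¬A ⇔ ¬B)`. -/
def Formula.sequiv (A B : Formula S V P) : Formula S V P :=
  .conj (A.equiv B) ((Formula.neg A).equiv (Formula.neg B))

end PLS0

namespace PLS0

variable {S V P : Type} [DecidableEq V]

/-- Four-valued evaluation over a one-element domain: `.1` is truth, `.2` is refutation. -/
def Formula.ev (vp vn : P → Prop) : Formula S V P → Prop × Prop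
  | .atom p _ => (vp p, vn p)
  | .impl A B => ((A.ev vp vn).1 → (B.ev vp vn).1, (A.ev vp vn).1 ∧ (B.ev vp vn).2)
  | .conj A B => ((A.ev vp vn).1 ∧ (B.ev vp vn).1, (A.ev vp vn).2 ∨ (B.ev vp vn).2)
  | .disj A B => ((A.ev vp vn).1 ∨ (B.ev vp vn).1, (A.ev vp vn).2 ∧ (B.ev vp vn).2)
  | .neg A => ((A.ev vp vn).2, (A.ev vp vn).1)
  | .all _ A => A.ev vp vn
  | .ex _ A => A.ev vp vn

theorem Formula.ev_subst (vp vn : P → Prop) (x y : V) (A : Formula S V P) :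
    (A.subst x y).ev vp vn = A.ev vp vn := by
  induction A with
  | all z A ih => simp only [Formula.subst]; split <;> simp [Formula.ev, ih]
  | ex z A ih => simp only [Formula.subst]; split <;> simp [Formula.ev, ih]
  | _ => simp_all [Formula.subst, Formula.ev]

theorem Deriv.sound (vp vn : P → Prop) {sortOf : V → S} {Γ : Set (Formula S V P)}
    {A : Formula S V P} (h : Deriv sortOf Γ A) :
    (∀ C ∈ Γ, (C.ev vp vn).1) → (A.ev vp vn).1 := by
  induction h with
  | ax h => intro hΓ; exact hΓ _ h
  | _ =>
    intro hΓ
    simp only [Set.forall_mem_insert, Formula.ev, Formula.ev_subst] at *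
    tauto

end PLS0

open PLS0 in
/-- In `PL^S₀` (with natural numbers as sorts, variables and
predicate symbols), for distinct propositional variables `A = p` and `B = q`
(nullary atoms), none of the formulae `A ∨ ¬A`, `A ⊃ (¬A ⊃ B)` and
`¬(A ∧ ¬A)` is derivable. -/
theorem PLS0.paraconsistency_witnesses (p q : ℕ) (hpq : p ≠ q) :
    ¬ Deriv (id : ℕ → ℕ) ∅
        (Formula.disj (.atom p ([] : List ℕ)) (.neg (.atom p []))) ∧
    ¬ Deriv (id : ℕ → ℕ) ∅
        (Formula.impl (.atom p ([] : List ℕ))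
          (.impl (.neg (.atom p [])) (.atom q []))) ∧
    ¬ Deriv (id : ℕ → ℕ) ∅
        (Formula.neg (.conj (.atom p ([] : List ℕ)) (.neg (.atom p [])))) := by
  refine ⟨fun h => ?_, fun h => ?_, fun h => ?_⟩
  · simpa [Formula.ev] using h.sound (fun _ => False) (fun _ => False)
  · have := h.sound (fun r => r ≠ q) (fun _ => True)
    simp [Formula.ev] at this
    exact hpq this
  · simpa [Formula.ev] using h.sound (fun _ => False) (fun _ => False)
end

section
/- In the logic PL^S₁, the strong equivalence (A ≺ B) ⇔ₛ ¬(¬B ⊃ ¬A) is derivable for all formulae A and B; that is, co-implication behaves as negated contraposed implication. -/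
/-!  Deep embedding of the many-sorted paraconsistent logic `PL^S₁`.

Formulae are built from atomic formulae (a predicate symbol applied to a list
of sorted individual variables) using implication `⊃`, conjunction `∧`,
disjunction `∨`, co-implication `≺` (`coimpl B A` denotes `B ≺ A`),
a primitive negation `¬`, and sorted quantifiers `∀`, `∃`.
Each variable carries a fixed sort given by a map `sortOf : V → S`;
terms are just variables (no function symbols).  -/

inductive PLS1.Formula (S V P : Type) : Type
  | atom   : P → List V → PLS1.Formula S V P
  | impl   : PLS1.Formula S V P → PLS1.Formula S V P → PLS1.Formula S V P
  | conj   : PLS1.Formula S V P → PLS1.Formula S V P → PLS1.Formula S V P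
  | disj   : PLS1.Formula S V P → PLS1.Formula S V P → PLS1.Formula S V P
  /-- `coimpl B A` is the co-implication `B ≺ A` (“`B` excludes `A`”). -/
  | coimpl : PLS1.Formula S V P → PLS1.Formula S V P → PLS1.Formula S V P
  | neg    : PLS1.Formula S V P → PLS1.Formula S V P
  | all    : V → PLS1.Formula S V P → PLS1.Formula S V P
  | ex     : V → PLS1.Formula S V P → PLS1.Formula S V P

namespace PLS1

variable {S V P : Type} [DecidableEq V]

/-- Free variables of a formula. -/
def Formula.free : Formula S V P → Set V
  | .atom _ args => {v | v ∈ args}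
  | .impl A B => A.free ∪ B.free
  | .conj A B => A.free ∪ B.free
  | .disj A B => A.free ∪ B.free
  | .coimpl A B => A.free ∪ B.free
  | .neg A => A.free
  | .all x A => A.free \ {x}
  | .ex x A => A.free \ {x}

/-- Bound variables of a formula. -/
def Formula.bound : Formula S V P → Set V
  | .atom _ _ => ∅
  | .impl A B => A.bound ∪ B.bound
  | .conj A B => A.bound ∪ B.bound
  | .disj A B => A.bound ∪ B.bound
  | .coimpl A B => A.bound ∪ B.bound
  | .neg A => A.bound
  | .all x A => insert x A.bound
  | .ex x A => insert x A.bound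

/-- `A.subst x y` replaces the free occurrences of the variable `x` by the
variable `y` in `A`. -/
def Formula.subst (x y : V) : Formula S V P → Formula S V P
  | .atom p args => .atom p (args.map fun v => if v = x then y else v)
  | .impl A B => .impl (A.subst x y) (B.subst x y)
  | .conj A B => .conj (A.subst x y) (B.subst x y)
  | .disj A B => .disj (A.subst x y) (B.subst x y)
  | .coimpl A B => .coimpl (A.subst x y) (B.subst x y)
  | .neg A => .neg (A.subst x y)
  | .all z A => if z = x then .all z A else .all z (A.subst x y)
  | .ex z A => if z = x then .ex z A else .ex z (A.subst x y)

/-- Natural-deduction derivability `Γ ⊢ A` in `PL^S₁`.  The rules for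
`⊃, ∧, ∨, ∀, ∃` are the intuitionistic ones; co-implication `B ≺ A` is
introduced from `¬A` and `B` and eliminated to `¬A` and to `B`; the primitive
negation is governed by introduction/elimination rules for the negation of
each connective: `¬(A⊃B)` has the rules of `A∧¬B`, `¬(A∧B)` those of `¬A∨¬B`,
`¬(A∨B)` those of `¬A∧¬B`, `¬(B≺A)` those of `¬A⊃¬B`, `¬∀x A` those of
`∃x ¬A`, `¬∃x A` those of `∀x ¬A`, and `¬¬A` those of `A`. -/
inductive Deriv (sortOf : V → S) : Set (Formula S V P) → Formula S V P → Prop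
  | ax {Γ A} : A ∈ Γ → Deriv sortOf Γ A
  -- implication
  | implI {Γ A B} : Deriv sortOf (insert A Γ) B → Deriv sortOf Γ (.impl A B)
  | implE {Γ A B} : Deriv sortOf Γ (.impl A B) → Deriv sortOf Γ A → Deriv sortOf Γ B
  -- conjunction
  | conjI {Γ A B} : Deriv sortOf Γ A → Deriv sortOf Γ B → Deriv sortOf Γ (.conj A B)
  | conjE1 {Γ A B} : Deriv sortOf Γ (.conj A B) → Deriv sortOf Γ A
  | conjE2 {Γ A B} : Deriv sortOf Γ (.conj A B) → Deriv sortOf Γ B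
  -- disjunction
  | disjI1 {Γ A B} : Deriv sortOf Γ A → Deriv sortOf Γ (.disj A B)
  | disjI2 {Γ A B} : Deriv sortOf Γ B → Deriv sortOf Γ (.disj A B)
  | disjE {Γ A B C} : Deriv sortOf Γ (.disj A B) → Deriv sortOf (insert A Γ) C →
      Deriv sortOf (insert B Γ) C → Deriv sortOf Γ C
  -- universal quantifier
  | allI {Γ x A} : Deriv sortOf Γ A → (∀ C ∈ Γ, x ∉ Formula.free C) →
      Deriv sortOf Γ (.all x A)
  | allE {Γ x y A} : Deriv sortOf Γ (.all x A) → sortOf y = sortOf x →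
      y ∉ Formula.bound A → Deriv sortOf Γ (A.subst x y)
  -- existential quantifier
  | exI {Γ x y A} : Deriv sortOf Γ (A.subst x y) → sortOf y = sortOf x →
      y ∉ Formula.bound A → Deriv sortOf Γ (.ex x A)
  | exE {Γ x A C} : Deriv sortOf Γ (.ex x A) → Deriv sortOf (insert A Γ) C →
      (∀ D ∈ Γ, x ∉ Formula.free D) → x ∉ Formula.free C → Deriv sortOf Γ C
  -- co-implication
  | coimplI {Γ A B} : Deriv sortOf Γ (.neg A) → Deriv sortOf Γ B →
      Deriv sortOf Γ (.coimpl B A)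
  | coimplE1 {Γ A B} : Deriv sortOf Γ (.coimpl B A) → Deriv sortOf Γ (.neg A)
  | coimplE2 {Γ A B} : Deriv sortOf Γ (.coimpl B A) → Deriv sortOf Γ B
  -- negated implication (rules of `A ∧ ¬B`)
  | negImplI {Γ A B} : Deriv sortOf Γ A → Deriv sortOf Γ (.neg B) →
      Deriv sortOf Γ (.neg (.impl A B))
  | negImplE1 {Γ A B} : Deriv sortOf Γ (.neg (.impl A B)) → Deriv sortOf Γ A
  | negImplE2 {Γ A B} : Deriv sortOf Γ (.neg (.impl A B)) → Deriv sortOf Γ (.neg B)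
  -- negated conjunction (rules of `¬A ∨ ¬B`)
  | negConjI1 {Γ A B} : Deriv sortOf Γ (.neg A) → Deriv sortOf Γ (.neg (.conj A B))
  | negConjI2 {Γ A B} : Deriv sortOf Γ (.neg B) → Deriv sortOf Γ (.neg (.conj A B))
  | negConjE {Γ A B C} : Deriv sortOf Γ (.neg (.conj A B)) →
      Deriv sortOf (insert (.neg A) Γ) C → Deriv sortOf (insert (.neg B) Γ) C →
      Deriv sortOf Γ C
  -- negated disjunction (rules of `¬A ∧ ¬B`)
  | negDisjI {Γ A B} : Deriv sortOf Γ (.neg A) → Deriv sortOf Γ (.neg B) →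
      Deriv sortOf Γ (.neg (.disj A B))
  | negDisjE1 {Γ A B} : Deriv sortOf Γ (.neg (.disj A B)) → Deriv sortOf Γ (.neg A)
  | negDisjE2 {Γ A B} : Deriv sortOf Γ (.neg (.disj A B)) → Deriv sortOf Γ (.neg B)
  -- negated co-implication (rules of `¬A ⊃ ¬B`)
  | negCoimplI {Γ A B} : Deriv sortOf (insert (.neg A) Γ) (.neg B) →
      Deriv sortOf Γ (.neg (.coimpl B A))
  | negCoimplE {Γ A B} : Deriv sortOf Γ (.neg (.coimpl B A)) →
      Deriv sortOf Γ (.neg A) → Deriv sortOf Γ (.neg B)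
  -- negated universal (rules of `∃x ¬A`)
  | negAllI {Γ x y A} : Deriv sortOf Γ (.neg (A.subst x y)) → sortOf y = sortOf x →
      y ∉ Formula.bound A → Deriv sortOf Γ (.neg (.all x A))
  | negAllE {Γ x A C} : Deriv sortOf Γ (.neg (.all x A)) →
      Deriv sortOf (insert (.neg A) Γ) C → (∀ D ∈ Γ, x ∉ Formula.free D) →
      x ∉ Formula.free C → Deriv sortOf Γ C
  -- negated existential (rules of `∀x ¬A`)
  | negExI {Γ x A} : Deriv sortOf Γ (.neg A) → (∀ C ∈ Γ, x ∉ Formula.free C) →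
      Deriv sortOf Γ (.neg (.ex x A))
  | negExE {Γ x y A} : Deriv sortOf Γ (.neg (.ex x A)) → sortOf y = sortOf x →
      y ∉ Formula.bound A → Deriv sortOf Γ (.neg (A.subst x y))
  -- double negation (rules of `A`)
  | negNegI {Γ A} : Deriv sortOf Γ A → Deriv sortOf Γ (.neg (.neg A))
  | negNegE {Γ A} : Deriv sortOf Γ (.neg (.neg A)) → Deriv sortOf Γ A

/-- Equivalence: `A ⇔ B := (A ⊃ B) ∧ (B ⊃ A)`. -/
def Formula.equiv (A B : Formula S V P) : Formula S V P :=
  .conj (.impl A B) (.impl B A)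

/-- Strong equivalence: `A ⇔ₛ B := (A ⇔ B) ∧ (¬A ⇔ ¬B)`. -/
def Formula.sequiv (A B : Formula S V P) : Formula S V P :=
  .conj (A.equiv B) ((Formula.neg A).equiv (Formula.neg B))

/-- `SubstOcc A B C C'` holds when `C'` is the result of substituting some
(possibly zero, possibly not all) occurrences of `A` by `B` in `C`. -/
inductive SubstOcc (A B : Formula S V P) : Formula S V P → Formula S V P → Prop
  | keep (C) : SubstOcc A B C C
  | replace : SubstOcc A B A B
  | impl {C₁ C₁' C₂ C₂'} : SubstOcc A B C₁ C₁' → SubstOcc A B C₂ C₂' →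
      SubstOcc A B (.impl C₁ C₂) (.impl C₁' C₂')
  | conj {C₁ C₁' C₂ C₂'} : SubstOcc A B C₁ C₁' → SubstOcc A B C₂ C₂' →
      SubstOcc A B (.conj C₁ C₂) (.conj C₁' C₂')
  | disj {C₁ C₁' C₂ C₂'} : SubstOcc A B C₁ C₁' → SubstOcc A B C₂ C₂' →
      SubstOcc A B (.disj C₁ C₂) (.disj C₁' C₂')
  | coimpl {C₁ C₁' C₂ C₂'} : SubstOcc A B C₁ C₁' → SubstOcc A B C₂ C₂' →
      SubstOcc A B (.coimpl C₁ C₂) (.coimpl C₁' C₂')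
  | neg {C C'} : SubstOcc A B C C' → SubstOcc A B (.neg C) (.neg C')
  | all {x C C'} : SubstOcc A B C C' → SubstOcc A B (.all x C) (.all x C')
  | ex {x C C'} : SubstOcc A B C C' → SubstOcc A B (.ex x C) (.ex x C')

/-- `A` and `B` are inter-substitutable (`A ≜ B`): for every formula `C`,
if `C'` results from substituting some occurrences of `A` by `B`
(or vice versa) in `C`, then `C ⊢ C'` and `C' ⊢ C`. -/
def InterSubst (sortOf : V → S) (A B : Formula S V P) : Prop :=
  ∀ C C' : Formula S V P, (SubstOcc A B C C' ∨ SubstOcc B A C C') →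
    Deriv sortOf {C} C' ∧ Deriv sortOf {C'} C

end PLS1

open PLS1 in
/-- In `PL^S₁`, the strong equivalence
`(A ≺ B) ⇔ₛ ¬(¬B ⊃ ¬A)` is derivable for all formulae `A` and `B`; that is,
co-implication behaves as negated contraposed implication
(recall `coimpl A B` denotes `A ≺ B`). -/
theorem PLS1.coimpl_sequiv_neg_contrapose {S V P : Type} [DecidableEq V]
    (sortOf : V → S) (A B : Formula S V P) :
    Deriv sortOf ∅
      ((Formula.coimpl A B).sequiv (.neg (.impl (.neg B) (.neg A)))) := by
  refine .conjI (.conjI (.implI ?_) (.implI ?_)) (.conjI (.implI ?_) (.implI ?_))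
  · exact .negImplI (.coimplE1 (.ax (Set.mem_insert _ _)))
      (.negNegI (.coimplE2 (.ax (Set.mem_insert _ _))))
  · exact .coimplI (.negImplE1 (.ax (Set.mem_insert _ _)))
      (.negNegE (.negImplE2 (.ax (Set.mem_insert _ _))))
  · exact .negNegI (.implI (.negCoimplE
      (.ax (Set.mem_insert_of_mem _ (Set.mem_insert _ _))) (.ax (Set.mem_insert _ _))))
  · exact .negCoimplI (.implE
      (.negNegE (.ax (Set.mem_insert_of_mem _ (Set.mem_insert _ _))))
      (.ax (Set.mem_insert _ _)))
end

section
/- Principle of duality in PTT₁: for every small type A of PTT₁, the judgemental equality ⊢ A = ¬(A^∂) : U₀ is derivable, where A^∂ is the dual of A. -/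
/-!  Deep embedding of the paraconsistent type theory `PTT₁`.

`PTT₁` extends the `→, ×, +, Π, Σ` intensional fragment of Martin-Löf type
theory with, for each small type `A`, an opposite type `¬A` (`Ty.opp A`) and,
for small types `A`, `B`, a co-function type `B ⤙ A` (`Ty.cofn B A`).

Terms `Tm` are the usual (Curry-style) Martin-Löf term constructors.
Small types (the types of universe `U₀`) `Ty` are generated from a
denumerable family of (possibly dependent) basic type variables
`Ty.tvar n ts` (the basic type variable `αₙ` applied to individual terms
`ts`), closed under `→, ×, +, Π, Σ, ⤙, ¬`.  Variables are natural numbers. -/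

namespace PTT1

/-- Terms of `PTT₁` (Curry-style). -/
inductive Tm : Type
  | var  : ℕ → Tm
  | lam  : ℕ → Tm → Tm
  | app  : Tm → Tm → Tm
  | pair : Tm → Tm → Tm
  | fst  : Tm → Tm
  | snd  : Tm → Tm
  | inl  : Tm → Tm
  | inr  : Tm → Tm
  /-- `case t x u y v` is `D(t, (x)u, (y)v)`, the case analysis on `t`. -/
  | case : Tm → ℕ → Tm → ℕ → Tm → Tm

/-- Substitution of the term `a` for the variable `x` in a term. -/
def Tm.subst (x : ℕ) (a : Tm) : Tm → Tm
  | .var y => if y = x then a else .var y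
  | .lam y b => if y = x then .lam y b else .lam y (Tm.subst x a b)
  | .app f t => .app (Tm.subst x a f) (Tm.subst x a t)
  | .pair s t => .pair (Tm.subst x a s) (Tm.subst x a t)
  | .fst t => .fst (Tm.subst x a t)
  | .snd t => .snd (Tm.subst x a t)
  | .inl t => .inl (Tm.subst x a t)
  | .inr t => .inr (Tm.subst x a t)
  | .case t y u z v =>
      .case (Tm.subst x a t) y (if y = x then u else Tm.subst x a u)
        z (if z = x then v else Tm.subst x a v)

/-- The set of (individual) variables occurring in a term. -/
def Tm.vars : Tm → Set ℕ
  | .var y => {y}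
  | .lam y b => insert y b.vars
  | .app f t => f.vars ∪ t.vars
  | .pair s t => s.vars ∪ t.vars
  | .fst t => t.vars
  | .snd t => t.vars
  | .inl t => t.vars
  | .inr t => t.vars
  | .case t y u z v => t.vars ∪ insert y u.vars ∪ insert z v.vars

/-- Small types of `PTT₁` (the types of the universe `U₀`). -/
inductive Ty : Type
  /-- `tvar n ts` is the basic type variable `αₙ` (representing an arbitrary,
  possibly dependent, basic type) applied to the individual terms `ts`. -/
  | tvar  : ℕ → List Tm → Ty
  | arrow : Ty → Ty → Ty
  | prod  : Ty → Ty → Ty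
  | sum   : Ty → Ty → Ty
  /-- `cofn B A` is the co-function type `B ⤙ A`. -/
  | cofn  : Ty → Ty → Ty
  /-- `pi x A B` is `Π x:A. B`; `A` is the generating type. -/
  | pi    : ℕ → Ty → Ty → Ty
  /-- `sigma x A B` is `Σ x:A. B`; `A` is the generating type. -/
  | sigma : ℕ → Ty → Ty → Ty
  /-- `opp A` is the opposite type `¬A`. -/
  | opp   : Ty → Ty

/-- Substitution of the term `a` for the individual variable `x` in a type. -/
def Ty.subst (x : ℕ) (a : Tm) : Ty → Ty
  | .tvar n ts => .tvar n (ts.map (Tm.subst x a))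
  | .arrow A B => .arrow (Ty.subst x a A) (Ty.subst x a B)
  | .prod A B => .prod (Ty.subst x a A) (Ty.subst x a B)
  | .sum A B => .sum (Ty.subst x a A) (Ty.subst x a B)
  | .cofn B A => .cofn (Ty.subst x a B) (Ty.subst x a A)
  | .pi y A B => .pi y (Ty.subst x a A) (if y = x then B else Ty.subst x a B)
  | .sigma y A B => .sigma y (Ty.subst x a A) (if y = x then B else Ty.subst x a B)
  | .opp A => .opp (Ty.subst x a A)

/-- The set of individual variables occurring in a type. -/
def Ty.vars : Ty → Set ℕ
  | .tvar _ ts => ts.foldr (fun t s => t.vars ∪ s) ∅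
  | .arrow A B => A.vars ∪ B.vars
  | .prod A B => A.vars ∪ B.vars
  | .sum A B => A.vars ∪ B.vars
  | .cofn B A => B.vars ∪ A.vars
  | .pi y A B => insert y (A.vars ∪ B.vars)
  | .sigma y A B => insert y (A.vars ∪ B.vars)
  | .opp A => A.vars

/-- Term conversion: beta, eta and co-eta computation rules together with
reflexivity, symmetry, transitivity and congruence. -/
inductive TmEq : Tm → Tm → Prop
  | refl (t) : TmEq t t
  | symm {s t} : TmEq s t → TmEq t s
  | trans {s t u} : TmEq s t → TmEq t u → TmEq s u
  -- beta-style computation rules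
  | beta {x b a} : TmEq (.app (.lam x b) a) (b.subst x a)
  | fstPair {a b} : TmEq (.fst (.pair a b)) a
  | sndPair {a b} : TmEq (.snd (.pair a b)) b
  | caseInl {a y u z v} : TmEq (.case (.inl a) y u z v) (u.subst y a)
  | caseInr {a y u z v} : TmEq (.case (.inr a) y u z v) (v.subst z a)
  -- eta rules
  | etaLam {x t} : x ∉ t.vars → TmEq (.lam x (.app t (.var x))) t
  | etaPair {t} : TmEq (.pair (.fst t) (.snd t)) t
  -- co-eta rule
  | coEtaCase {t y z} : TmEq (.case t y (.inl (.var y)) z (.inr (.var z))) t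
  -- congruence
  | congLam {x b b'} : TmEq b b' → TmEq (.lam x b) (.lam x b')
  | congApp {f f' a a'} : TmEq f f' → TmEq a a' → TmEq (.app f a) (.app f' a')
  | congPair {a a' b b'} : TmEq a a' → TmEq b b' → TmEq (.pair a b) (.pair a' b')
  | congFst {t t'} : TmEq t t' → TmEq (.fst t) (.fst t')
  | congSnd {t t'} : TmEq t t' → TmEq (.snd t) (.snd t')
  | congInl {t t'} : TmEq t t' → TmEq (.inl t) (.inl t')
  | congInr {t t'} : TmEq t t' → TmEq (.inr t) (.inr t')
  | congCase {t t' y u u' z v v'} : TmEq t t' → TmEq u u' → TmEq v v' →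
      TmEq (.case t y u z v) (.case t' y u' z v')

/-- Judgemental equality of small types in `U₀` (`⊢ A = B : U₀`), generated by
the equality rules for the opposite type constructor together with
reflexivity, symmetry, transitivity and congruence. -/
inductive TyEq : Ty → Ty → Prop
  | refl (A) : TyEq A A
  | symm {A B} : TyEq A B → TyEq B A
  | trans {A B C} : TyEq A B → TyEq B C → TyEq A C
  -- equality rules for the opposite type constructor
  | oppArrow {A B} : TyEq (.opp (.arrow A B)) (.cofn (.opp B) (.opp A))
  | oppCofn {A B} : TyEq (.opp (.cofn B A)) (.arrow (.opp A) (.opp B))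
  | oppProd {A B} : TyEq (.opp (.prod A B)) (.sum (.opp A) (.opp B))
  | oppSum {A B} : TyEq (.opp (.sum A B)) (.prod (.opp A) (.opp B))
  | oppPi {x A B} : TyEq (.opp (.pi x A B)) (.sigma x A (.opp B))
  | oppSigma {x A B} : TyEq (.opp (.sigma x A B)) (.pi x A (.opp B))
  | oppOpp {A} : TyEq (.opp (.opp A)) A
  -- congruence
  | congArrow {A A' B B'} : TyEq A A' → TyEq B B' → TyEq (.arrow A B) (.arrow A' B')
  | congProd {A A' B B'} : TyEq A A' → TyEq B B' → TyEq (.prod A B) (.prod A' B')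
  | congSum {A A' B B'} : TyEq A A' → TyEq B B' → TyEq (.sum A B) (.sum A' B')
  | congCofn {A A' B B'} : TyEq B B' → TyEq A A' → TyEq (.cofn B A) (.cofn B' A')
  | congPi {x A A' B B'} : TyEq A A' → TyEq B B' → TyEq (.pi x A B) (.pi x A' B')
  | congSigma {x A A' B B'} : TyEq A A' → TyEq B B' → TyEq (.sigma x A B) (.sigma x A' B')
  | congOpp {A A'} : TyEq A A' → TyEq (.opp A) (.opp A')

/-- Contexts: lists of typed variable declarations (most recent first). -/
abbrev Ctx := List (ℕ × Ty)

/-- `x` is fresh for the context `Γ`. -/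
def Fresh (x : ℕ) (Γ : Ctx) : Prop :=
  ∀ p ∈ Γ, x ≠ p.1 ∧ x ∉ Ty.vars p.2

/-- The typing judgement `Γ ⊢ t : A` of `PTT₁`.  It comprises the usual rules
for `→, ×, +, Π, Σ`, the rules for co-function types (`B ⤙ A` behaves as
`¬A × B`), the introduction/elimination rules for opposite types
(`¬(A→B)` behaves as `A×¬B`, `¬(A×B)` as `¬A+¬B`, `¬(A+B)` as `¬A×¬B`,
`¬(Πx:A.B)` as `Σx:A.¬B`, `¬(Σx:A.B)` as `Πx:A.¬B`, `¬(B⤙A)` as `¬A→¬B`,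
`¬¬A` as `A`), and conversion under term equality (including the eta and
co-eta rules) and under judgemental type equality. -/
inductive HasType : Ctx → Tm → Ty → Prop
  | var {Γ x A} : (x, A) ∈ Γ → HasType Γ (.var x) A
  -- function types
  | arrowI {Γ x A b B} : Fresh x Γ → HasType ((x, A) :: Γ) b B →
      HasType Γ (.lam x b) (.arrow A B)
  | arrowE {Γ f a A B} : HasType Γ f (.arrow A B) → HasType Γ a A →
      HasType Γ (.app f a) B
  -- product types
  | prodI {Γ a b A B} : HasType Γ a A → HasType Γ b B →
      HasType Γ (.pair a b) (.prod A B)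
  | prodE1 {Γ p A B} : HasType Γ p (.prod A B) → HasType Γ (.fst p) A
  | prodE2 {Γ p A B} : HasType Γ p (.prod A B) → HasType Γ (.snd p) B
  -- sum types
  | sumI1 {Γ a A B} : HasType Γ a A → HasType Γ (.inl a) (.sum A B)
  | sumI2 {Γ b A B} : HasType Γ b B → HasType Γ (.inr b) (.sum A B)
  | sumE {Γ t x u y v A B C} : Fresh x Γ → Fresh y Γ →
      HasType Γ t (.sum A B) → HasType ((x, A) :: Γ) u C →
      HasType ((y, B) :: Γ) v C → HasType Γ (.case t x u y v) C
  -- Pi types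
  | piI {Γ x A b B} : Fresh x Γ → HasType ((x, A) :: Γ) b B →
      HasType Γ (.lam x b) (.pi x A B)
  | piE {Γ f a x A B} : HasType Γ f (.pi x A B) → HasType Γ a A →
      HasType Γ (.app f a) (B.subst x a)
  -- Sigma types
  | sigmaI {Γ a b x A B} : HasType Γ a A → HasType Γ b (B.subst x a) →
      HasType Γ (.pair a b) (.sigma x A B)
  | sigmaE1 {Γ p x A B} : HasType Γ p (.sigma x A B) → HasType Γ (.fst p) A
  | sigmaE2 {Γ p x A B} : HasType Γ p (.sigma x A B) →
      HasType Γ (.snd p) (B.subst x (.fst p))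
  -- co-function types (`B ⤙ A` behaves as `¬A × B`)
  | cofnI {Γ a b A B} : HasType Γ a (.opp A) → HasType Γ b B →
      HasType Γ (.pair a b) (.cofn B A)
  | cofnE1 {Γ p A B} : HasType Γ p (.cofn B A) → HasType Γ (.fst p) (.opp A)
  | cofnE2 {Γ p A B} : HasType Γ p (.cofn B A) → HasType Γ (.snd p) B
  -- opposites of function types (`¬(A→B)` behaves as `A × ¬B`)
  | oppArrowI {Γ a b A B} : HasType Γ a A → HasType Γ b (.opp B) →
      HasType Γ (.pair a b) (.opp (.arrow A B))
  | oppArrowE1 {Γ p A B} : HasType Γ p (.opp (.arrow A B)) → HasType Γ (.fst p) A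
  | oppArrowE2 {Γ p A B} : HasType Γ p (.opp (.arrow A B)) →
      HasType Γ (.snd p) (.opp B)
  -- opposites of product types (`¬(A×B)` behaves as `¬A + ¬B`)
  | oppProdI1 {Γ a A B} : HasType Γ a (.opp A) → HasType Γ (.inl a) (.opp (.prod A B))
  | oppProdI2 {Γ b A B} : HasType Γ b (.opp B) → HasType Γ (.inr b) (.opp (.prod A B))
  | oppProdE {Γ t x u y v A B C} : Fresh x Γ → Fresh y Γ →
      HasType Γ t (.opp (.prod A B)) → HasType ((x, .opp A) :: Γ) u C →
      HasType ((y, .opp B) :: Γ) v C → HasType Γ (.case t x u y v) C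
  -- opposites of sum types (`¬(A+B)` behaves as `¬A × ¬B`)
  | oppSumI {Γ a b A B} : HasType Γ a (.opp A) → HasType Γ b (.opp B) →
      HasType Γ (.pair a b) (.opp (.sum A B))
  | oppSumE1 {Γ p A B} : HasType Γ p (.opp (.sum A B)) → HasType Γ (.fst p) (.opp A)
  | oppSumE2 {Γ p A B} : HasType Γ p (.opp (.sum A B)) → HasType Γ (.snd p) (.opp B)
  -- opposites of Pi types (`¬(Πx:A.B)` behaves as `Σx:A.¬B`)
  | oppPiI {Γ a b x A B} : HasType Γ a A → HasType Γ b (.opp (B.subst x a)) →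
      HasType Γ (.pair a b) (.opp (.pi x A B))
  | oppPiE1 {Γ p x A B} : HasType Γ p (.opp (.pi x A B)) → HasType Γ (.fst p) A
  | oppPiE2 {Γ p x A B} : HasType Γ p (.opp (.pi x A B)) →
      HasType Γ (.snd p) (.opp (B.subst x (.fst p)))
  -- opposites of Sigma types (`¬(Σx:A.B)` behaves as `Πx:A.¬B`)
  | oppSigmaI {Γ x A b B} : Fresh x Γ → HasType ((x, A) :: Γ) b (.opp B) →
      HasType Γ (.lam x b) (.opp (.sigma x A B))
  | oppSigmaE {Γ f a x A B} : HasType Γ f (.opp (.sigma x A B)) → HasType Γ a A →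
      HasType Γ (.app f a) (.opp (B.subst x a))
  -- opposites of co-function types (`¬(B⤙A)` behaves as `¬A → ¬B`)
  | oppCofnI {Γ x A b B} : Fresh x Γ → HasType ((x, .opp A) :: Γ) b (.opp B) →
      HasType Γ (.lam x b) (.opp (.cofn B A))
  | oppCofnE {Γ f a A B} : HasType Γ f (.opp (.cofn B A)) → HasType Γ a (.opp A) →
      HasType Γ (.app f a) (.opp B)
  -- opposites of opposite types (`¬¬A` behaves as `A`)
  | oppOppI {Γ a A} : HasType Γ a A → HasType Γ a (.opp (.opp A))
  | oppOppE {Γ a A} : HasType Γ a (.opp (.opp A)) → HasType Γ a A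
  -- conversion
  | convTm {Γ t t' A} : HasType Γ t A → TmEq t t' → HasType Γ t' A
  | convTy {Γ t A B} : HasType Γ t A → TyEq A B → HasType Γ t B

/-- Equivalence of small types in `U₀` (`A ≡ B`): for every context `Γ` and
every term `t`, `Γ ⊢ t : A` iff `Γ ⊢ t : B`. -/
def TyEquiv (A B : Ty) : Prop :=
  ∀ (Γ : Ctx) (t : Tm), HasType Γ t A ↔ HasType Γ t B

/-- Strong equivalence of small types (`A ≡ₛ B`): `A ≡ B` and `¬A ≡ ¬B`. -/
def TyStrongEquiv (A B : Ty) : Prop :=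
  TyEquiv A B ∧ TyEquiv (.opp A) (.opp B)

/-- `SubstOcc A B C C'` holds when the type `C'` is the result of substituting
some (possibly zero, possibly not all) occurrences of `A` by `B` in `C`. -/
inductive SubstOcc (A B : Ty) : Ty → Ty → Prop
  | keep (C) : SubstOcc A B C C
  | replace : SubstOcc A B A B
  | arrow {C₁ C₁' C₂ C₂'} : SubstOcc A B C₁ C₁' → SubstOcc A B C₂ C₂' →
      SubstOcc A B (.arrow C₁ C₂) (.arrow C₁' C₂')
  | prod {C₁ C₁' C₂ C₂'} : SubstOcc A B C₁ C₁' → SubstOcc A B C₂ C₂' →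
      SubstOcc A B (.prod C₁ C₂) (.prod C₁' C₂')
  | sum {C₁ C₁' C₂ C₂'} : SubstOcc A B C₁ C₁' → SubstOcc A B C₂ C₂' →
      SubstOcc A B (.sum C₁ C₂) (.sum C₁' C₂')
  | cofn {C₁ C₁' C₂ C₂'} : SubstOcc A B C₁ C₁' → SubstOcc A B C₂ C₂' →
      SubstOcc A B (.cofn C₁ C₂) (.cofn C₁' C₂')
  | pi {x C₁ C₁' C₂ C₂'} : SubstOcc A B C₁ C₁' → SubstOcc A B C₂ C₂' →
      SubstOcc A B (.pi x C₁ C₂) (.pi x C₁' C₂')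
  | sigma {x C₁ C₁' C₂ C₂'} : SubstOcc A B C₁ C₁' → SubstOcc A B C₂ C₂' →
      SubstOcc A B (.sigma x C₁ C₂) (.sigma x C₁' C₂')
  | opp {C C'} : SubstOcc A B C C' → SubstOcc A B (.opp C) (.opp C')

/-- `A` and `B` are inter-substitutable in `U₀`: for every small type `C`,
when `C'` is the result of substituting some occurrences of `A` by `B`
(or vice versa) in `C`, then `x : C ⊢ x : C'` and `x : C' ⊢ x : C` for every
variable `x` not occurring in `C`. -/
def InterSubst (A B : Ty) : Prop :=
  ∀ C C' : Ty, (SubstOcc A B C C' ∨ SubstOcc B A C C') →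
    ∀ x : ℕ, x ∉ C.vars →
      HasType [(x, C)] (.var x) C' ∧ HasType [(x, C')] (.var x) C

end PTT1

namespace PTT1

/-- The dual `A^∂` of a type `A`: exchange `→` and `⤙` (swapping the
left-hand and the right-hand types of these constructors), exchange `×` and
`+`, exchange `Π` and `Σ`, and exchange each type variable `α` by `¬α`,
leaving the generating types unchanged. -/
def Ty.dual : Ty → Ty
  | .tvar n ts => .opp (.tvar n ts)
  | .arrow A B => .cofn (Ty.dual B) (Ty.dual A)   -- (A → B)^∂ = B^∂ ⤙ A^∂
  | .cofn B A => .arrow (Ty.dual A) (Ty.dual B)   -- (B ⤙ A)^∂ = A^∂ → B^∂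
  | .prod A B => .sum (Ty.dual A) (Ty.dual B)
  | .sum A B => .prod (Ty.dual A) (Ty.dual B)
  | .pi x A B => .sigma x A (Ty.dual B)
  | .sigma x A B => .pi x A (Ty.dual B)
  | .opp A => .opp (Ty.dual A)

end PTT1

open PTT1 in
/-- **Principle of duality in `PTT₁`.** For every small type
`A` of `PTT₁`, the judgemental equality `⊢ A = ¬(A^∂) : U₀` is derivable. -/
theorem PTT1.duality_principle (A : Ty) :
    TyEq A (.opp A.dual) := by
  induction A with
  | tvar n ts => exact .symm .oppOpp
  | arrow A B ihA ihB => exact .trans (.congArrow ihA ihB) (.symm .oppCofn)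
  | prod A B ihA ihB => exact .trans (.congProd ihA ihB) (.symm .oppSum)
  | sum A B ihA ihB => exact .trans (.congSum ihA ihB) (.symm .oppProd)
  | cofn B A ihB ihA => exact .trans (.congCofn ihB ihA) (.symm .oppArrow)
  | pi x A B _ ihB => exact .trans (.congPi (.refl A) ihB) (.symm .oppSigma)
  | sigma x A B _ ihB => exact .trans (.congSigma (.refl A) ihB) (.symm .oppPi)
  | opp A ih => exact .congOpp ih
end

section
/- Every small type of PTT₁ is judgementally equal (in U₀) to a type in opposite normal form, i.e. to a type in which the opposite constructor ¬ is only applied to type variables. -/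
namespace PTT1

/-- A type is in *opposite normal form* if the opposite constructor `¬` is
only applied to type variables in it. -/
def Ty.OppNormal : Ty → Prop
  | .tvar _ _ => True
  | .arrow A B => Ty.OppNormal A ∧ Ty.OppNormal B
  | .prod A B => Ty.OppNormal A ∧ Ty.OppNormal B
  | .sum A B => Ty.OppNormal A ∧ Ty.OppNormal B
  | .cofn B A => Ty.OppNormal B ∧ Ty.OppNormal A
  | .pi _ A B => Ty.OppNormal A ∧ Ty.OppNormal B
  | .sigma _ A B => Ty.OppNormal A ∧ Ty.OppNormal B
  | .opp (.tvar _ _) => True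
  | .opp _ => False

end PTT1

namespace PTT1

theorem oppNormal_aux (A : Ty) :
    (∃ B : Ty, Ty.OppNormal B ∧ TyEq A B) ∧
      (∃ B : Ty, Ty.OppNormal B ∧ TyEq (.opp A) B) := by
  induction A with
  | tvar n ts =>
    exact ⟨⟨.tvar n ts, by simp [Ty.OppNormal], .refl _⟩,
      ⟨.opp (.tvar n ts), by simp [Ty.OppNormal], .refl _⟩⟩
  | arrow A B ihA ihB =>
    obtain ⟨⟨A₁, hA₁, eA₁⟩, ⟨A₂, hA₂, eA₂⟩⟩ := ihA
    obtain ⟨⟨B₁, hB₁, eB₁⟩, ⟨B₂, hB₂, eB₂⟩⟩ := ihB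
    exact ⟨⟨.arrow A₁ B₁, by simp [Ty.OppNormal, *], .congArrow eA₁ eB₁⟩,
      ⟨.cofn B₂ A₂, by simp [Ty.OppNormal, *], .trans .oppArrow (.congCofn eB₂ eA₂)⟩⟩
  | prod A B ihA ihB =>
    obtain ⟨⟨A₁, hA₁, eA₁⟩, ⟨A₂, hA₂, eA₂⟩⟩ := ihA
    obtain ⟨⟨B₁, hB₁, eB₁⟩, ⟨B₂, hB₂, eB₂⟩⟩ := ihB
    exact ⟨⟨.prod A₁ B₁, by simp [Ty.OppNormal, *], .congProd eA₁ eB₁⟩,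
      ⟨.sum A₂ B₂, by simp [Ty.OppNormal, *], .trans .oppProd (.congSum eA₂ eB₂)⟩⟩
  | sum A B ihA ihB =>
    obtain ⟨⟨A₁, hA₁, eA₁⟩, ⟨A₂, hA₂, eA₂⟩⟩ := ihA
    obtain ⟨⟨B₁, hB₁, eB₁⟩, ⟨B₂, hB₂, eB₂⟩⟩ := ihB
    exact ⟨⟨.sum A₁ B₁, by simp [Ty.OppNormal, *], .congSum eA₁ eB₁⟩,
      ⟨.prod A₂ B₂, by simp [Ty.OppNormal, *], .trans .oppSum (.congProd eA₂ eB₂)⟩⟩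
  | cofn B A ihB ihA =>
    obtain ⟨⟨A₁, hA₁, eA₁⟩, ⟨A₂, hA₂, eA₂⟩⟩ := ihA
    obtain ⟨⟨B₁, hB₁, eB₁⟩, ⟨B₂, hB₂, eB₂⟩⟩ := ihB
    exact ⟨⟨.cofn B₁ A₁, by simp [Ty.OppNormal, *], .congCofn eB₁ eA₁⟩,
      ⟨.arrow A₂ B₂, by simp [Ty.OppNormal, *], .trans .oppCofn (.congArrow eA₂ eB₂)⟩⟩
  | pi x A B ihA ihB =>
    obtain ⟨⟨A₁, hA₁, eA₁⟩, -⟩ := ihA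
    obtain ⟨⟨B₁, hB₁, eB₁⟩, ⟨B₂, hB₂, eB₂⟩⟩ := ihB
    exact ⟨⟨.pi x A₁ B₁, by simp [Ty.OppNormal, *], .congPi eA₁ eB₁⟩,
      ⟨.sigma x A₁ B₂, by simp [Ty.OppNormal, *], .trans .oppPi (.congSigma eA₁ eB₂)⟩⟩
  | sigma x A B ihA ihB =>
    obtain ⟨⟨A₁, hA₁, eA₁⟩, -⟩ := ihA
    obtain ⟨⟨B₁, hB₁, eB₁⟩, ⟨B₂, hB₂, eB₂⟩⟩ := ihB
    exact ⟨⟨.sigma x A₁ B₁, by simp [Ty.OppNormal, *], .congSigma eA₁ eB₁⟩,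
      ⟨.pi x A₁ B₂, by simp [Ty.OppNormal, *], .trans .oppSigma (.congPi eA₁ eB₂)⟩⟩
  | opp A ih =>
    obtain ⟨⟨A₁, hA₁, eA₁⟩, h⟩ := ih
    exact ⟨h, ⟨A₁, hA₁, .trans .oppOpp eA₁⟩⟩

end PTT1

open PTT1 in
/-- Every small type of `PTT₁` is judgementally equal (in
`U₀`) to a type in opposite normal form, i.e. to a type in which the opposite
constructor `¬` is only applied to type variables. -/
theorem PTT1.exists_oppNormal_tyEq (A : Ty) :
    ∃ B : Ty, Ty.OppNormal B ∧ TyEq A B := by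
  exact (oppNormal_aux A).1
end
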